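/- Suppose G acts linearly on a finite dimensional vector space V over a field k whose characteristic is coprime to |G|. If H_{λ,κ} is a PBW deformation of S(V)⋊G for some parameter functions λ: kG×V → kG and κ: V×V → kG ⊕ (V⊗kG), then there exists a parameter function κ': V×V → kG ⊕ (V⊗kG) such that H_{λ,κ} ≅ H_{0,κ'} as filtered algebras, and consequently H_{0,κ'} also has the PBW property. -/

import Mathlib

open TensorProduct

noncomputable section

namespace DeformKoszul

variable (k G V : Type) [Field k] [Group G] [AddCommGroup V] [Module k V]

/-- The free `k`-algebra on the vector space `kG ⊕ V`. -/
abbrev FreeAlg := TensorAlgebra k (MonoidAlgebra k G × V)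

/-- The canonical embedding of the group algebra `kG` into the free algebra. -/
def gIn : MonoidAlgebra k G →ₗ[k] FreeAlg k G V :=
  (TensorAlgebra.ι k).comp (LinearMap.inl k (MonoidAlgebra k G) V)

/-- The canonical embedding of `V` into the free algebra. -/
def vIn : V →ₗ[k] FreeAlg k G V :=
  (TensorAlgebra.ι k).comp (LinearMap.inr k (MonoidAlgebra k G) V)

/-- `V ⊗ kG → FreeAlg`, `v ⊗ x ↦ v·x`. -/
def embVG : V ⊗[k] MonoidAlgebra k G →ₗ[k] FreeAlg k G V :=
  (LinearMap.mul' k _).comp (TensorProduct.map (vIn k G V) (gIn k G V))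

variable (ρ : Representation k G V)

/-- The defining relations of `H_{λ,κ}`: `kG` is a subalgebra (with the same unit),
`g·v = (ᵍv)·g + λ(g,v)`, and `v·w = w·v + κ^L(v,w) + κ^C(v,w)`. -/
inductive PRel (lam : G → V →ₗ[k] MonoidAlgebra k G)
    (κC : V →ₗ[k] V →ₗ[k] MonoidAlgebra k G)
    (κL : V →ₗ[k] V →ₗ[k] (V ⊗[k] MonoidAlgebra k G)) :
    FreeAlg k G V → FreeAlg k G V → Prop
  | unit : PRel lam κC κL (gIn k G V 1) 1
  | gmul (x y : MonoidAlgebra k G) :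
      PRel lam κC κL (gIn k G V x * gIn k G V y) (gIn k G V (x * y))
  | act (g : G) (v : V) :
      PRel lam κC κL (gIn k G V (MonoidAlgebra.of k G g) * vIn k G V v)
        (vIn k G V (ρ g v) * gIn k G V (MonoidAlgebra.of k G g) + gIn k G V (lam g v))
  | comm (v w : V) :
      PRel lam κC κL (vIn k G V v * vIn k G V w)
        (vIn k G V w * vIn k G V v + embVG k G V (κL v w) + gIn k G V (κC v w))

variable (lam : G → V →ₗ[k] MonoidAlgebra k G)
    (κC : V →ₗ[k] V →ₗ[k] MonoidAlgebra k G)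
    (κL : V →ₗ[k] V →ₗ[k] (V ⊗[k] MonoidAlgebra k G))

/-- The algebra `H_{λ,κ}`.  For `lam = 0`, `κC = 0`, `κL = 0` this is (the presentation
of) the skew group algebra `S(V) ⋊ G`. -/
abbrev HP := RingQuot (PRel k G V ρ lam κC κL)

/-- The quotient map onto `H_{λ,κ}`. -/
def toHP : FreeAlg k G V →ₐ[k] HP k G V ρ lam κC κL :=
  RingQuot.mkAlgHom k (PRel k G V ρ lam κC κL)

/-- Degree-`n` part of the free algebra: `kG` has degree 0 and `V` degree 1. -/
def grT : ℕ → Submodule k (FreeAlg k G V)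
  | 0 => Subalgebra.toSubmodule (Algebra.adjoin k (Set.range (gIn k G V)))
  | n+1 => grT n * (LinearMap.range (vIn k G V) * grT 0)

/-- Filtration of the free algebra, `kG` in degree 0 and `V` in degree 1. -/
def filtT : ℕ → Submodule k (FreeAlg k G V)
  | 0 => grT k G V 0
  | n+1 => filtT n ⊔ grT k G V (n+1)

/-- The induced filtration on `H_{λ,κ}`. -/
def filtP (d : ℕ) : Submodule k (HP k G V ρ lam κC κL) :=
  (filtT k G V d).map (toHP k G V ρ lam κC κL).toLinearMap

/-- `H_{λ,κ}` is a PBW deformation of `S(V) ⋊ G`:  the associated graded algebra is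
`S(V) ⋊ G`, equivalently (all filtered pieces being finite dimensional) each filtered
piece has the same dimension as the corresponding one of `S(V) ⋊ G = H_{0,0}`. -/
def IsPBWP : Prop :=
  ∀ d, Module.finrank k (filtP k G V ρ lam κC κL d) = Module.finrank k (filtP k G V ρ 0 0 0 d)

end DeformKoszul

open DeformKoszul

/-!
Replacing the generators `v ∈ V` of `H_{λ,κ}` by `v + γ(v)`, for a linear map `γ : V → kG`, changes
neither the algebra nor its filtration, but it changes the parameters; in particular `λ(g, v)`
becomes `λ(g, v) + g γ(v) - γ(ᵍv) g`. By the PBW property `kG` embeds in `H_{λ,κ}`, so computing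
`(gh)v = g(hv)` there shows that `λ` is a cocycle. As `|G|` is invertible, `λ` is a coboundary by
averaging over `G`, so a suitable `γ` makes the new `λ` vanish.
-/

namespace DeformKoszul

section TensorMul

variable {k A B M N : Type*} [CommSemiring k] [Semiring A] [Algebra k A] [Semiring B] [Algebra k B]
  [AddCommMonoid M] [Module k M] [AddCommMonoid N] [Module k N]

/-- The linear map `M ⊗ N → A`, `m ⊗ n ↦ φ m * f n`; it evaluates `V ⊗ kG` in any algebra that
receives both `V` and `kG`. -/
def tensorMul (φ : M →ₗ[k] A) (f : N →ₗ[k] A) : M ⊗[k] N →ₗ[k] A :=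
  LinearMap.mul' k A ∘ₗ TensorProduct.map φ f

@[simp]
lemma tensorMul_tmul (φ : M →ₗ[k] A) (f : N →ₗ[k] A) (m : M) (n : N) :
    tensorMul φ f (m ⊗ₜ n) = φ m * f n := by
  simp [tensorMul]

lemma tensorMul_add_left (φ ψ : M →ₗ[k] A) (f : N →ₗ[k] A) :
    tensorMul (φ + ψ) f = tensorMul φ f + tensorMul ψ f := by
  simp only [tensorMul, TensorProduct.map_add_left, LinearMap.comp_add]

@[simp]
lemma tensorMul_zero_left (f : N →ₗ[k] A) : tensorMul (0 : M →ₗ[k] A) f = 0 := by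
  simp only [tensorMul, TensorProduct.map_zero_left, LinearMap.comp_zero]

lemma map_tensorMul (F : A →ₐ[k] B) (φ : M →ₗ[k] A) (f : N →ₗ[k] A) (t : M ⊗[k] N) :
    F (tensorMul φ f t) = tensorMul (F.toLinearMap ∘ₗ φ) (F.toLinearMap ∘ₗ f) t := by
  induction t with
  | zero => simp only [map_zero]
  | tmul m n => simp
  | add s t hs ht => simp only [map_add, hs, ht]

end TensorMul

section Skew

variable {k M N : Type*} [CommSemiring k] [AddCommMonoid M] [Module k M] [AddCommGroup N]
  [Module k N]

/-- The alternating bilinear map `(v, w) ↦ B v w - B w v`. -/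
def skew (B : M →ₗ[k] M →ₗ[k] N) : M →ₗ[k] M →ₗ[k] N := B - B.flip

end Skew

section Averaging

variable {k G V A : Type*} [CommSemiring k] [Group G] [AddCommMonoid V] [Module k V]
  [Semiring A] [Algebra k A]

/-- The condition `λ(gh, v) = λ(g, ʰv) h + g λ(h, v)`: equivalently, `g ↦ λ(g, g⁻¹ · ) g⁻¹` is a
1-cocycle of `G` with values in `Hom(V, A)`. -/
def IsTwistedCocycle (ρ : Representation k G V) (u : G →* A) (c : G → V →ₗ[k] A) : Prop :=
  ∀ g h v, c (g * h) v = c g (ρ h v) * u h + u g * c h v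

/-- The average `γ(v) = |G|⁻¹ ∑ₕ λ(h, h⁻¹v) h⁻¹`, of which a twisted cocycle `λ` is the
coboundary. -/
def average [Fintype G] [Invertible (Fintype.card G : k)] (ρ : Representation k G V) (u : G →* A)
    (c : G → V →ₗ[k] A) : V →ₗ[k] A :=
  ⅟(Fintype.card G : k) • ∑ h : G, LinearMap.mulRight k (u h⁻¹) ∘ₗ c h ∘ₗ ρ h⁻¹

lemma average_apply [Fintype G] [Invertible (Fintype.card G : k)] (ρ : Representation k G V)
    (u : G →* A) (c : G → V →ₗ[k] A) (v : V) :
    average ρ u c v = ⅟(Fintype.card G : k) • ∑ h : G, c h (ρ h⁻¹ v) * u h⁻¹ := by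
  simp [average]

lemma IsTwistedCocycle.mul_average_add [Fintype G] [Invertible (Fintype.card G : k)]
    {ρ : Representation k G V} {u : G →* A} {c : G → V →ₗ[k] A} (hc : IsTwistedCocycle ρ u c)
    (g : G) (v : V) :
    u g * average ρ u c v + c g v = average ρ u c (ρ g v) * u g := by
  have hconst : c g v = ⅟(Fintype.card G : k) • ∑ _h : G, c g v := by
    rw [Finset.sum_const, Finset.card_univ, ← Nat.cast_smul_eq_nsmul k, invOf_smul_smul]
  have hsummand (h : G) : u g * (c h (ρ h⁻¹ v) * u h⁻¹) + c g v =
      c (g * h) (ρ (g * h)⁻¹ (ρ g v)) * u (g * h)⁻¹ * u g := by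
    have hv : ρ (g * h)⁻¹ (ρ g v) = ρ h⁻¹ v := by
      rw [← Module.End.mul_apply, ← map_mul, mul_inv_rev, inv_mul_cancel_right]
    have hu : u (g * h)⁻¹ * u g = u h⁻¹ := by
      rw [← map_mul, mul_inv_rev, inv_mul_cancel_right]
    rw [hv, mul_assoc, hu, hc, Representation.self_inv_apply, add_mul, mul_assoc (c g v),
      ← map_mul, mul_inv_cancel, map_one, mul_one, mul_assoc (u g), add_comm]
  rw [hconst, average_apply, average_apply, mul_smul_comm, smul_mul_assoc, ← smul_add,
    Finset.mul_sum, Finset.sum_mul, ← Finset.sum_add_distrib]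
  congr 1
  exact Fintype.sum_equiv (Equiv.mulLeft g) _ _ hsummand

end Averaging

section DeformParams

variable {k G V A : Type*} [CommRing k] [Monoid G] [AddCommGroup V] [Module k V]
  [Ring A] [Algebra k A] {ρ : Representation k G V}

/-- The parameters `(λ, κ)` of a deformation of `S(V) ⋊ G`, where `κ = κC + κL` is split into its
components in `kG` and `V ⊗ kG`. The action `ρ` is recorded because changes of generators depend
on it. -/
@[ext]
structure DeformParams (ρ : Representation k G V) where
  lam : G → V →ₗ[k] MonoidAlgebra k G
  κC : V →ₗ[k] V →ₗ[k] MonoidAlgebra k G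
  κL : V →ₗ[k] V →ₗ[k] (V ⊗[k] MonoidAlgebra k G)

variable (ρ) in
/-- The part `g ⊗ w ↦ (ᵍw - w) ⊗ g` in `V ⊗ kG` of the commutator of `kG` with `V`. -/
def bracketL : MonoidAlgebra k G →ₗ[k] V →ₗ[k] V ⊗[k] MonoidAlgebra k G :=
  (MonoidAlgebra.basis G k).constr k fun g =>
    (TensorProduct.mk k V (MonoidAlgebra k G)).flip (MonoidAlgebra.of k G g) ∘ₗ
      (ρ g - LinearMap.id)

lemma bracketL_of (g : G) (w : V) :
    bracketL ρ (MonoidAlgebra.of k G g) w = (ρ g w - w) ⊗ₜ MonoidAlgebra.of k G g := by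
  rw [bracketL, MonoidAlgebra.of_apply, ← MonoidAlgebra.basis_apply, Module.Basis.constr_basis]
  rfl

namespace DeformParams

/-- The part in `kG` of the commutator of `kG` with `V`: the linear extension of `λ`. -/
def bracketC (P : DeformParams ρ) : MonoidAlgebra k G →ₗ[k] V →ₗ[k] MonoidAlgebra k G :=
  (MonoidAlgebra.basis G k).constr k P.lam

lemma bracketC_of (P : DeformParams ρ) (g : G) : P.bracketC (MonoidAlgebra.of k G g) = P.lam g := by
  rw [bracketC, MonoidAlgebra.of_apply, ← MonoidAlgebra.basis_apply, Module.Basis.constr_basis]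

/-- The pair `f : kG → A`, `φ : V → A` satisfies the defining relations of `H_{λ,κ}`. -/
structure Realizes (P : DeformParams ρ) (f : MonoidAlgebra k G →ₐ[k] A) (φ : V →ₗ[k] A) :
    Prop where
  act (g : G) (v : V) : f (MonoidAlgebra.of k G g) * φ v =
    φ (ρ g v) * f (MonoidAlgebra.of k G g) + f (P.lam g v)
  comm (v w : V) : φ v * φ w =
    φ w * φ v + tensorMul φ f.toLinearMap (P.κL v w) + f (P.κC v w)

lemma Realizes.map_mul_eq {P : DeformParams ρ} {f : MonoidAlgebra k G →ₐ[k] A} {φ : V →ₗ[k] A}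
    (h : P.Realizes f φ) (x : MonoidAlgebra k G) (w : V) :
    f x * φ w = φ w * f x + tensorMul φ f.toLinearMap (bracketL ρ x w) + f (P.bracketC x w) := by
  induction x using MonoidAlgebra.induction_on with
  | of g =>
    rw [bracketL_of, bracketC_of, tensorMul_tmul, h.act, map_sub, sub_mul,
      AlgHom.toLinearMap_apply]
    abel
  | add x y hx hy =>
    simp only [map_add, add_mul, mul_add, hx, hy, LinearMap.add_apply]
    abel
  | smul r x hx =>
    simp only [map_smul, LinearMap.smul_apply, smul_mul_assoc, mul_smul_comm, hx, smul_add]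

/-- The parameters of the presentation of `H_{λ,κ}` in the generators `v + γ(v)`, for which
`[v + γ(v), w + γ(w)] = [v, w] + [γ(v), w] - [γ(w), v] + [γ(v), γ(w)]`. The last term of `κC`
corrects for reading the tensors `v ⊗ x` of the new `κL` as `(v + γ(v)) x` instead of `v x`. -/
instance : VAdd (V →ₗ[k] MonoidAlgebra k G) (DeformParams ρ) where
  vadd γ P :=
    let κL' := P.κL + skew (bracketL ρ ∘ₗ γ)
    { lam := fun g => P.lam g + LinearMap.mulLeft k (MonoidAlgebra.of k G g) ∘ₗ γ -
        LinearMap.mulRight k (MonoidAlgebra.of k G g) ∘ₗ γ ∘ₗ ρ g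
      κC := P.κC + skew (P.bracketC ∘ₗ γ + (LinearMap.mul k _).compl₁₂ γ γ) -
        κL'.compr₂ (tensorMul γ LinearMap.id)
      κL := κL' }

lemma vadd_lam_apply (γ : V →ₗ[k] MonoidAlgebra k G) (P : DeformParams ρ) (g : G) (v : V) :
    (γ +ᵥ P).lam g v =
      P.lam g v + MonoidAlgebra.of k G g * γ v - γ (ρ g v) * MonoidAlgebra.of k G g := rfl

lemma vadd_κL_apply (γ : V →ₗ[k] MonoidAlgebra k G) (P : DeformParams ρ) (v w : V) :
    (γ +ᵥ P).κL v w = P.κL v w + (bracketL ρ (γ v) w - bracketL ρ (γ w) v) := rfl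

lemma vadd_κC_apply (γ : V →ₗ[k] MonoidAlgebra k G) (P : DeformParams ρ) (v w : V) :
    (γ +ᵥ P).κC v w =
      P.κC v w + ((P.bracketC (γ v) w + γ v * γ w) - (P.bracketC (γ w) v + γ w * γ v)) -
        tensorMul γ LinearMap.id ((γ +ᵥ P).κL v w) := rfl

lemma vadd_bracketC_apply (γ : V →ₗ[k] MonoidAlgebra k G) (P : DeformParams ρ)
    (x : MonoidAlgebra k G) (w : V) :
    (γ +ᵥ P).bracketC x w =
      P.bracketC x w + x * γ w - γ w * x - tensorMul γ LinearMap.id (bracketL ρ x w) := by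
  induction x using MonoidAlgebra.induction_on with
  | of g =>
    rw [bracketC_of, bracketC_of, bracketL_of, vadd_lam_apply, tensorMul_tmul, map_sub, sub_mul,
      LinearMap.id_apply]
    abel
  | add x y hx hy =>
    simp only [map_add, add_mul, mul_add, hx, hy, LinearMap.add_apply]
    abel
  | smul r x hx =>
    simp only [map_smul, LinearMap.smul_apply, smul_mul_assoc, mul_smul_comm, hx, smul_add,
      smul_sub]

instance : AddAction (V →ₗ[k] MonoidAlgebra k G) (DeformParams ρ) where
  zero_vadd P := by
    ext1
    · funext g
      ext1 v
      simp [vadd_lam_apply]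
    · ext1 v
      ext1 w
      simp [vadd_κC_apply]
    · ext1 v
      ext1 w
      simp [vadd_κL_apply]
  add_vadd γ δ P := by
    ext1
    · funext g
      ext1 v
      simp only [vadd_lam_apply, LinearMap.add_apply, mul_add, add_mul]
      abel
    · ext1 v
      ext1 w
      simp only [vadd_κC_apply, vadd_κL_apply, vadd_bracketC_apply, LinearMap.add_apply, map_add,
        map_sub, tensorMul_add_left, mul_add, add_mul]
      abel
    · ext1 v
      ext1 w
      simp only [vadd_κL_apply, LinearMap.add_apply, map_add]
      abel

lemma vadd_κL_isAlt {P : DeformParams ρ} (hL : P.κL.IsAlt) (γ : V →ₗ[k] MonoidAlgebra k G) :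
    (γ +ᵥ P).κL.IsAlt := fun v => by
  rw [vadd_κL_apply, sub_self, add_zero, hL]

lemma vadd_κC_isAlt {P : DeformParams ρ} (hC : P.κC.IsAlt) (hL : P.κL.IsAlt)
    (γ : V →ₗ[k] MonoidAlgebra k G) : (γ +ᵥ P).κC.IsAlt := fun v => by
  rw [vadd_κC_apply, vadd_κL_isAlt hL, sub_self, add_zero, hC, map_zero, sub_zero]

lemma Realizes.vadd {P : DeformParams ρ} {f : MonoidAlgebra k G →ₐ[k] A} {φ : V →ₗ[k] A}
    (h : P.Realizes f φ) (γ : V →ₗ[k] MonoidAlgebra k G) :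
    (γ +ᵥ P).Realizes f (φ + f.toLinearMap ∘ₗ γ) where
  act g v := by
    simp only [vadd_lam_apply, LinearMap.add_apply, LinearMap.comp_apply,
      AlgHom.toLinearMap_apply, mul_add, add_mul, map_add, map_sub, map_mul, h.act]
    abel
  comm v w := by
    have hγ (t : V ⊗[k] MonoidAlgebra k G) :
        tensorMul (f.toLinearMap ∘ₗ γ) f.toLinearMap t = f (tensorMul γ LinearMap.id t) :=
      (map_tensorMul f γ LinearMap.id t).symm
    simp only [vadd_κC_apply, vadd_κL_apply, tensorMul_add_left, LinearMap.add_apply,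
      LinearMap.comp_apply, AlgHom.toLinearMap_apply, mul_add, add_mul, map_add, map_sub, map_mul,
      hγ, h.comm v w, h.map_mul_eq (γ v) w, h.map_mul_eq (γ w) v]
    abel

end DeformParams

end DeformParams

section Filtration

variable {k G V : Type} [Field k] [AddCommGroup V] [Module k V]

lemma grT_le_filtT (n : ℕ) : grT k G V n ≤ filtT k G V n := by
  cases n with
  | zero => exact le_rfl
  | succ n => exact le_sup_right

lemma filtT_succ (n : ℕ) :
    filtT k G V (n + 1) =
      filtT k G V n ⊔ filtT k G V n * (LinearMap.range (vIn k G V) * grT k G V 0) := by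
  refine le_antisymm ?_ (sup_le le_sup_left ?_)
  · rw [filtT.eq_2, grT.eq_2]
    exact sup_le_sup_left (mul_le_mul' (grT_le_filtT n) le_rfl) _
  induction n with
  | zero => exact (grT.eq_2 k G V 0).ge.trans le_sup_right
  | succ n ih =>
    rw [filtT.eq_2 k G V n, Submodule.sup_mul]
    exact sup_le_sup ih (grT.eq_2 k G V (n + 1)).ge

end Filtration

namespace DeformParams

section Algebra

variable {k G V : Type} {A : Type*} [Field k] [Group G] [AddCommGroup V] [Module k V]
  [Ring A] [Algebra k A] {ρ : Representation k G V}

/-- The algebra `H_{λ,κ}` of the parameters `P = (λ, κ)`. -/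
abbrev Alg (P : DeformParams ρ) : Type := HP k G V ρ P.lam P.κC P.κL

/-- The filtration of `H_{λ,κ}` with `kG` in degree 0 and `V` in degree 1. -/
abbrev filt (P : DeformParams ρ) (d : ℕ) : Submodule k P.Alg := filtP k G V ρ P.lam P.κC P.κL d

variable (P : DeformParams ρ)

/-- The structure map `kG → H_{λ,κ}`. -/
def ιG : MonoidAlgebra k G →ₐ[k] P.Alg :=
  AlgHom.ofLinearMap ((toHP k G V ρ P.lam P.κC P.κL).toLinearMap ∘ₗ gIn k G V)
    (RingQuot.mkAlgHom_rel k PRel.unit |>.trans (map_one _))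
    fun x y => (RingQuot.mkAlgHom_rel k (PRel.gmul x y)).symm.trans (map_mul _ _ _)

/-- The structure map `V → H_{λ,κ}`. -/
def ιV : V →ₗ[k] P.Alg := (toHP k G V ρ P.lam P.κC P.κL).toLinearMap ∘ₗ vIn k G V

lemma realizes_ι : P.Realizes P.ιG P.ιV where
  act g v := by
    have h := RingQuot.mkAlgHom_rel k
      (PRel.act (ρ := ρ) (lam := P.lam) (κC := P.κC) (κL := P.κL) g v)
    simp only [map_mul, map_add] at h
    exact h
  comm v w := by
    have h := RingQuot.mkAlgHom_rel k
      (PRel.comm (ρ := ρ) (lam := P.lam) (κC := P.κC) (κL := P.κL) v w)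
    simp only [map_mul, map_add] at h
    refine h.trans ?_
    congr 2
    exact map_tensorMul (toHP k G V ρ P.lam P.κC P.κL) (vIn k G V) (gIn k G V) _

variable {P}

lemma algHom_ext {F F' : P.Alg →ₐ[k] A} (hG : F.comp P.ιG = F'.comp P.ιG)
    (hV : F.toLinearMap ∘ₗ P.ιV = F'.toLinearMap ∘ₗ P.ιV) : F = F' :=
  RingQuot.ringQuot_ext' k _ _ <| TensorAlgebra.hom_ext <|
    LinearMap.prod_ext (congrArg AlgHom.toLinearMap hG) hV

/-- The universal property of `H_{λ,κ}`. -/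
def Realizes.lift {f : MonoidAlgebra k G →ₐ[k] A} {φ : V →ₗ[k] A} (h : P.Realizes f φ) :
    P.Alg →ₐ[k] A :=
  RingQuot.liftAlgHom k ⟨TensorAlgebra.lift k (f.toLinearMap.coprod φ), by
    set F := TensorAlgebra.lift k (f.toLinearMap.coprod φ)
    have hG : F.toLinearMap ∘ₗ gIn k G V = f.toLinearMap := by
      refine LinearMap.ext fun x => ?_
      simp [F, gIn]
    have hV : F.toLinearMap ∘ₗ vIn k G V = φ := by
      refine LinearMap.ext fun v => ?_
      simp [F, vIn]
    have hGx (x : MonoidAlgebra k G) : F (gIn k G V x) = f x := LinearMap.congr_fun hG x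
    have hVv (v : V) : F (vIn k G V v) = φ v := LinearMap.congr_fun hV v
    have hVG (t : V ⊗[k] MonoidAlgebra k G) : F (embVG k G V t) = tensorMul φ f.toLinearMap t := by
      rw [← hG, ← hV, ← map_tensorMul]
      rfl
    rintro _ _ (_ | ⟨x, y⟩ | ⟨g, v⟩ | ⟨v, w⟩)
    · rw [hGx, map_one, map_one]
    · rw [map_mul, hGx, hGx, hGx, map_mul]
    · simp only [map_mul, map_add, hGx, hVv, h.act]
    · simp only [map_mul, map_add, hGx, hVv, hVG, h.comm v w]⟩

@[simp]
lemma Realizes.lift_ιG {f : MonoidAlgebra k G →ₐ[k] A} {φ : V →ₗ[k] A} (h : P.Realizes f φ)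
    (x : MonoidAlgebra k G) : h.lift (P.ιG x) = f x := by
  simp [Realizes.lift, ιG, toHP, gIn]

@[simp]
lemma Realizes.lift_ιV {f : MonoidAlgebra k G →ₐ[k] A} {φ : V →ₗ[k] A} (h : P.Realizes f φ)
    (v : V) : h.lift (P.ιV v) = φ v := by
  simp [Realizes.lift, ιV, toHP, vIn]

variable (P) in
lemma filt_zero : P.filt 0 = LinearMap.range P.ιG.toLinearMap := by
  have h : (Algebra.adjoin k (Set.range (gIn k G V))).map (toHP k G V ρ P.lam P.κC P.κL) =
      P.ιG.range := by
    rw [AlgHom.map_adjoin, ← Set.range_comp]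
    exact Algebra.adjoin_eq P.ιG.range
  rw [filt, filtP, filtT, grT]
  exact congrArg Subalgebra.toSubmodule h

variable (P) in
lemma filt_succ (n : ℕ) :
    P.filt (n + 1) = P.filt n ⊔ P.filt n * (LinearMap.range P.ιV * P.filt 0) := by
  rw [filt, filtP, filtT_succ, Submodule.map_sup, Submodule.map_mul, Submodule.map_mul,
    ← LinearMap.range_comp]
  rfl

lemma ιG_mem_filt_zero (x : MonoidAlgebra k G) : P.ιG x ∈ P.filt 0 :=
  P.filt_zero ▸ ⟨x, rfl⟩

lemma one_le_filt_zero : 1 ≤ P.filt 0 :=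
  Submodule.one_le.mpr (map_one P.ιG ▸ ιG_mem_filt_zero 1)

lemma filt_le_succ (n : ℕ) : P.filt n ≤ P.filt (n + 1) :=
  P.filt_succ n ▸ le_sup_left

lemma ιV_mem_filt_one (v : V) : P.ιV v ∈ P.filt 1 := by
  have h1 : (1 : P.Alg) ∈ P.filt 0 := Submodule.one_le.mp one_le_filt_zero
  rw [filt_succ]
  refine Submodule.mem_sup_right ?_
  simpa using Submodule.mul_mem_mul h1 (Submodule.mul_mem_mul (LinearMap.mem_range_self P.ιV v) h1)

lemma filt_mul_filt_zero (n : ℕ) : P.filt n * P.filt 0 ≤ P.filt n := by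
  have h0 : P.filt 0 * P.filt 0 ≤ P.filt 0 := by
    rw [filt_zero]
    exact P.ιG.range.isIdempotentElem_toSubmodule.le
  induction n with
  | zero => exact h0
  | succ n ih =>
    rw [filt_succ, Submodule.sup_mul, mul_assoc, mul_assoc]
    exact sup_le_sup ih (by gcongr)

lemma filt_mul_filt_one (n : ℕ) : P.filt n * P.filt 1 ≤ P.filt (n + 1) := by
  rw [P.filt_succ 0, P.filt_succ n, Submodule.mul_sup, ← mul_assoc]
  exact sup_le_sup (filt_mul_filt_zero n) (mul_le_mul_left (filt_mul_filt_zero n) _)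

lemma map_filt_le {Q : DeformParams ρ} (F : P.Alg →ₐ[k] Q.Alg)
    (hG : ∀ x, F (P.ιG x) ∈ Q.filt 0) (hV : ∀ v, F (P.ιV v) ∈ Q.filt 1) (d : ℕ) :
    (P.filt d).map F.toLinearMap ≤ Q.filt d := by
  have hG' : (P.filt 0).map F.toLinearMap ≤ Q.filt 0 := by
    rw [filt_zero, Submodule.map_le_iff_le_comap]
    rintro _ ⟨x, rfl⟩
    exact hG x
  have hV' : (LinearMap.range P.ιV).map F.toLinearMap ≤ Q.filt 1 := by
    rw [Submodule.map_le_iff_le_comap]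
    rintro _ ⟨v, rfl⟩
    exact hV v
  induction d with
  | zero => exact hG'
  | succ n ih =>
    rw [P.filt_succ, Submodule.map_sup, Submodule.map_mul, Submodule.map_mul]
    refine sup_le (ih.trans (filt_le_succ n)) ?_
    calc _ ≤ Q.filt n * (Q.filt 1 * Q.filt 0) := mul_le_mul' ih (mul_le_mul' hV' hG')
      _ ≤ Q.filt n * Q.filt 1 := mul_le_mul_right (filt_mul_filt_zero 1) _
      _ ≤ Q.filt (n + 1) := filt_mul_filt_one n

lemma map_filt_eq {Q : DeformParams ρ} (e : P.Alg ≃ₐ[k] Q.Alg)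
    (hG : ∀ x, e (P.ιG x) ∈ Q.filt 0) (hV : ∀ v, e (P.ιV v) ∈ Q.filt 1)
    (hG' : ∀ x, e.symm (Q.ιG x) ∈ P.filt 0) (hV' : ∀ v, e.symm (Q.ιV v) ∈ P.filt 1) (d : ℕ) :
    (P.filt d).map (e.toLinearEquiv : P.Alg →ₗ[k] Q.Alg) = Q.filt d := by
  refine le_antisymm (map_filt_le e.toAlgHom hG hV d) fun y hy => ?_
  exact ⟨e.symm y, map_filt_le e.symm.toAlgHom hG' hV' d ⟨y, hy, rfl⟩, e.apply_symm_apply y⟩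

section ChangeOfGenerators

variable {Q : DeformParams ρ} {γ δ : V →ₗ[k] MonoidAlgebra k G}

/-- The homomorphism sending the generators `v` of the algebra of `γ +ᵥ P` to `v + γ(v)`. Since
`-γ +ᵥ (γ +ᵥ P) = P` is not definitional, the equality is a hypothesis, which makes the inverse
homomorphism one of the same form. -/
def vaddHom (γ : V →ₗ[k] MonoidAlgebra k G) (h : γ +ᵥ P = Q) : Q.Alg →ₐ[k] P.Alg :=
  (show Q.Realizes P.ιG (P.ιV + P.ιG.toLinearMap ∘ₗ γ) from h ▸ P.realizes_ι.vadd γ).lift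

@[simp]
lemma vaddHom_ιG (h : γ +ᵥ P = Q) (x : MonoidAlgebra k G) : vaddHom γ h (Q.ιG x) = P.ιG x :=
  Realizes.lift_ιG _ x

@[simp]
lemma vaddHom_ιV (h : γ +ᵥ P = Q) (v : V) : vaddHom γ h (Q.ιV v) = P.ιV v + P.ιG (γ v) :=
  Realizes.lift_ιV _ v

lemma vaddHom_comp_vaddHom (h : γ +ᵥ P = Q) (h' : δ +ᵥ Q = P) (hγδ : γ + δ = 0) :
    (vaddHom γ h).comp (vaddHom δ h') = AlgHom.id k P.Alg := by
  refine algHom_ext (AlgHom.ext fun x => by simp) (LinearMap.ext fun v => ?_)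
  have hv : γ v + δ v = 0 := LinearMap.congr_fun hγδ v
  simp only [LinearMap.comp_apply, AlgHom.toLinearMap_apply, AlgHom.comp_apply, AlgHom.id_apply]
  rw [vaddHom_ιV, map_add, vaddHom_ιV, vaddHom_ιG, add_assoc, ← map_add, hv, map_zero, add_zero]

variable (γ P) in
/-- A change of generators `v ↦ v + γ(v)` does not affect the algebra. -/
def vaddEquiv : P.Alg ≃ₐ[k] (γ +ᵥ P).Alg :=
  AlgEquiv.ofAlgHom (vaddHom (-γ) (neg_vadd_vadd γ P)) (vaddHom γ rfl)
    (vaddHom_comp_vaddHom _ _ (neg_add_cancel γ)) (vaddHom_comp_vaddHom _ _ (add_neg_cancel γ))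

lemma vaddHom_ιV_mem_filt_one (h : γ +ᵥ P = Q) (v : V) : vaddHom γ h (Q.ιV v) ∈ P.filt 1 := by
  rw [vaddHom_ιV]
  exact add_mem (ιV_mem_filt_one v) (filt_le_succ 0 (ιG_mem_filt_zero _))

lemma vaddHom_ιG_mem_filt_zero (h : γ +ᵥ P = Q) (x : MonoidAlgebra k G) :
    vaddHom γ h (Q.ιG x) ∈ P.filt 0 :=
  vaddHom_ιG h x ▸ ιG_mem_filt_zero x

variable (γ P) in
lemma map_filt_vaddEquiv (d : ℕ) :
    (P.filt d).map ((vaddEquiv P γ).toLinearEquiv : P.Alg →ₗ[k] (γ +ᵥ P).Alg) =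
      (γ +ᵥ P).filt d :=
  map_filt_eq _ (vaddHom_ιG_mem_filt_zero _) (vaddHom_ιV_mem_filt_one _)
    (vaddHom_ιG_mem_filt_zero _) (vaddHom_ιV_mem_filt_one _) d

end ChangeOfGenerators

section PBW

lemma ιG_injective_of_lam_eq_zero_of_κC_eq_zero (hlam : P.lam = 0) (hC : P.κC = 0) :
    Function.Injective P.ιG := by
  have h : P.Realizes (AlgHom.id k (MonoidAlgebra k G)) 0 :=
    ⟨by simp [hlam], by simp [hC]⟩
  exact Function.LeftInverse.injective h.lift_ιG

lemma ιG_injective_of_isPBWP [Finite G] (h : IsPBWP k G V ρ P.lam P.κC P.κL) :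
    Function.Injective P.ιG := by
  have : Module.Finite k (MonoidAlgebra k G) := .of_basis (MonoidAlgebra.basis G k)
  have hrank : Module.finrank k (LinearMap.range P.ιG.toLinearMap) =
      Module.finrank k (MonoidAlgebra k G) := by
    rw [← filt_zero, ← LinearMap.finrank_range_of_inj (f := (ιG ⟨0, 0, 0⟩).toLinearMap)
      (ιG_injective_of_lam_eq_zero_of_κC_eq_zero (ρ := ρ) rfl rfl), ← filt_zero]
    exact h 0
  have hker := LinearMap.finrank_range_add_finrank_ker P.ιG.toLinearMap
  rw [hrank, add_eq_left, Submodule.finrank_eq_zero] at hker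
  exact LinearMap.ker_eq_bot.mp hker

lemma isTwistedCocycle_lam (hinj : Function.Injective P.ιG) :
    IsTwistedCocycle ρ (MonoidAlgebra.of k G) P.lam := fun g h v => by
  have hact := P.realizes_ι.act
  have hgh := hact (g * h) v
  rw [map_mul, map_mul, mul_assoc, hact h, mul_add, ← mul_assoc, hact g, map_mul,
    Module.End.mul_apply, add_mul, mul_assoc, add_assoc] at hgh
  apply hinj
  rw [map_add, map_mul, map_mul]
  exact (add_left_cancel hgh).symm

lemma isPBWP_of_map_filt_eq {Q : DeformParams ρ} (h : IsPBWP k G V ρ P.lam P.κC P.κL)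
    (e : P.Alg ≃ₗ[k] Q.Alg) (he : ∀ d, (P.filt d).map (e : P.Alg →ₗ[k] Q.Alg) = Q.filt d) :
    IsPBWP k G V ρ Q.lam Q.κC Q.κL := fun d => by
  rw [← h d, ← show _ = filtP k G V ρ Q.lam Q.κC Q.κL d from he d]
  exact e.finrank_map_eq _

end PBW

lemma average_vadd_lam_eq_zero [Fintype G] [Invertible (Fintype.card G : k)]
    (P : DeformParams ρ) (h : IsTwistedCocycle ρ (MonoidAlgebra.of k G) P.lam) :
    (average ρ (MonoidAlgebra.of k G) P.lam +ᵥ P).lam = 0 := by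
  funext g
  ext1 v
  rw [vadd_lam_apply, ← h.mul_average_add, add_comm, sub_self]
  rfl

end Algebra

end DeformParams

end DeformKoszul

theorem untwist_group_action_nonmodular_general
    {k G V : Type} [Field k] [Group G] [Fintype G] [AddCommGroup V] [Module k V]
    (hcard : (Fintype.card G : k) ≠ 0) {ρ : Representation k G V}
    {lam : G → V →ₗ[k] MonoidAlgebra k G}
    (hlam : IsTwistedCocycle ρ (MonoidAlgebra.of k G) lam)
    {κC : V →ₗ[k] V →ₗ[k] MonoidAlgebra k G}
    {κL : V →ₗ[k] V →ₗ[k] (V ⊗[k] MonoidAlgebra k G)}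
    (hC : κC.IsAlt) (hL : κL.IsAlt) :
    ∃ (κC' : V →ₗ[k] V →ₗ[k] MonoidAlgebra k G)
      (κL' : V →ₗ[k] V →ₗ[k] (V ⊗[k] MonoidAlgebra k G)),
      κC'.IsAlt ∧ κL'.IsAlt ∧
      ∃ e : HP k G V ρ lam κC κL ≃ₐ[k] HP k G V ρ 0 κC' κL',
        ∀ d, Submodule.map (e.toLinearEquiv : _ →ₗ[k] _) (filtP k G V ρ lam κC κL d)
          = filtP k G V ρ 0 κC' κL' d := by
  have : Invertible (Fintype.card G : k) := invertibleOfNonzero hcard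
  let P : DeformParams ρ := ⟨lam, κC, κL⟩
  let γ := average ρ (MonoidAlgebra.of k G) lam
  have hγ : (γ +ᵥ P).lam = 0 := P.average_vadd_lam_eq_zero hlam
  refine ⟨(γ +ᵥ P).κC, (γ +ᵥ P).κL, DeformParams.vadd_κC_isAlt hC hL γ,
    DeformParams.vadd_κL_isAlt hL γ, ?_⟩
  rw [← hγ]
  exact ⟨P.vaddEquiv γ, P.map_filt_vaddEquiv γ⟩

/-- **Theorem 6.1** of Shepler–Witherspoon, "Deforming group actions on Koszul
algebras": if the characteristic of `k` is coprime to `|G|` and `H_{λ,κ}` is a PBW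
deformation of `S(V) ⋊ G`, then there is a parameter `κ' = κ'^C + κ'^L` such that
`H_{λ,κ} ≅ H_{0,κ'}` as filtered algebras; consequently `H_{0,κ'}` also has the PBW
property. -/
theorem untwist_group_action_nonmodular
    (k G V : Type) [Field k] [Group G] [Fintype G] [AddCommGroup V] [Module k V]
    [FiniteDimensional k V] (h2 : (2 : k) ≠ 0) (hcard : (Fintype.card G : k) ≠ 0)
    (ρ : Representation k G V)
    (lam : G → V →ₗ[k] MonoidAlgebra k G)
    (κC : V →ₗ[k] V →ₗ[k] MonoidAlgebra k G)
    (κL : V →ₗ[k] V →ₗ[k] (V ⊗[k] MonoidAlgebra k G))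
    (hC : ∀ v, κC v v = 0) (hL : ∀ v, κL v v = 0)
    (hPBW : IsPBWP k G V ρ lam κC κL) :
    ∃ (κC' : V →ₗ[k] V →ₗ[k] MonoidAlgebra k G)
      (κL' : V →ₗ[k] V →ₗ[k] (V ⊗[k] MonoidAlgebra k G)),
      (∃ e : HP k G V ρ lam κC κL ≃ₐ[k] HP k G V ρ 0 κC' κL',
        ∀ d, Submodule.map (e.toLinearEquiv : _ →ₗ[k] _) (filtP k G V ρ lam κC κL d)
          = filtP k G V ρ 0 κC' κL' d) ∧
      IsPBWP k G V ρ 0 κC' κL' := by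
  let P : DeformParams ρ := ⟨lam, κC, κL⟩
  have hinj : Function.Injective P.ιG := DeformParams.ιG_injective_of_isPBWP hPBW
  obtain ⟨κC', κL', -, -, e, he⟩ := untwist_group_action_nonmodular_general hcard
    (DeformParams.isTwistedCocycle_lam hinj) hC hL
  exact ⟨κC', κL', ⟨e, he⟩,
    DeformParams.isPBWP_of_map_filt_eq (P := P) (Q := ⟨0, κC', κL'⟩) hPBW e.toLinearEquiv he⟩
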